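/- For any real numbers c₁ < c₂ there exists a C^∞ function τ : ℝ → ℝ which is monotone increasing and convex on all of ℝ, satisfies τ(t) = 0 for every t ≤ 1/(c₂ − c₁) and τ(t) > 0 for every t > 1/(c₂ − c₁), and for which the integral ∫₀^{+∞} √(τ''(t)) dt diverges to +∞. -/

import Mathlib

open MeasureTheory

/-! With `σ x = x² e^{-1/x}` for `x > 0` and `σ x = 0` for `x ≤ 0`, one has
`σ'' x = ((1 + 1/x)² + 1) e^{-1/x}` for `x > 0`. Hence `σ'' ≥ 0`, and `σ''` is bounded below by
`e⁻¹` on `[1, ∞)`, so that the integral of `√σ''` diverges. Translates of `σ` have the required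
properties. -/

theorem lintegral_Ioi_eq_top_of_eventually_le {f : ℝ → ENNReal} {c : ENNReal} (hc : c ≠ 0)
    (hf : ∀ᶠ t in Filter.atTop, c ≤ f t) (a : ℝ) : ∫⁻ t in Set.Ioi a, f t = ⊤ := by
  obtain ⟨b, hb⟩ := Filter.eventually_atTop.1 hf
  rw [eq_top_iff]
  calc
    ⊤ = ∫⁻ _ in Set.Ioi (max a b), c := by
      rw [setLIntegral_const, Real.volume_Ioi, ENNReal.mul_top hc]
    _ ≤ ∫⁻ t in Set.Ioi (max a b), f t :=
      setLIntegral_mono' measurableSet_Ioi fun t ht => hb t ((le_max_right a b).trans ht.le)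
    _ ≤ ∫⁻ t in Set.Ioi a, f t := lintegral_mono_set (Set.Ioi_subset_Ioi (le_max_left a b))

-- At `x = 0` the junk value `0⁻¹ = 0` is harmless, since `expNegInvGlue 0 = 0`.
theorem hasDerivAt_expNegInvGlue (x : ℝ) :
    HasDerivAt expNegInvGlue (x⁻¹ ^ 2 * expNegInvGlue x) x := by
  simpa using expNegInvGlue.hasDerivAt_polynomial_eval_inv_mul 1 x

/-- The function equal to `x² e^{-1/x}` for `x > 0` and to `0` for `x ≤ 0`: a smooth convex
function whose second derivative stays away from `0` at infinity. One factor `x` would already give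
convexity, but with second derivative `x⁻³ e^{-1/x}`, whose square root is integrable. -/
noncomputable def sqMulExpNegInvGlue (x : ℝ) : ℝ :=
  x ^ 2 * expNegInvGlue x

namespace sqMulExpNegInvGlue

theorem zero_of_nonpos {x : ℝ} (hx : x ≤ 0) : sqMulExpNegInvGlue x = 0 := by
  rw [sqMulExpNegInvGlue, expNegInvGlue.zero_of_nonpos hx, mul_zero]

theorem pos_of_pos {x : ℝ} (hx : 0 < x) : 0 < sqMulExpNegInvGlue x :=
  mul_pos (pow_pos hx 2) (expNegInvGlue.pos_of_pos hx)

theorem contDiff {n : ℕ∞} : ContDiff ℝ n sqMulExpNegInvGlue :=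
  (contDiff_id.pow 2).mul expNegInvGlue.contDiff

theorem differentiable : Differentiable ℝ sqMulExpNegInvGlue :=
  (contDiff (n := 1)).differentiable one_ne_zero

theorem deriv_eq : deriv sqMulExpNegInvGlue = fun x => (2 * x + 1) * expNegInvGlue x := by
  ext x
  refine (((hasDerivAt_pow 2 x).mul (hasDerivAt_expNegInvGlue x)).congr_deriv ?_).deriv
  rcases eq_or_ne x 0 with rfl | hx
  · simp
  · field_simp
    ring

theorem deriv_deriv_eq :
    deriv (deriv sqMulExpNegInvGlue) = fun x => ((1 + x⁻¹) ^ 2 + 1) * expNegInvGlue x := by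
  rw [deriv_eq]
  ext x
  have hlin : HasDerivAt (fun y : ℝ => 2 * y + 1) 2 x := by
    simpa using ((hasDerivAt_id x).const_mul 2).add_const 1
  refine ((hlin.mul (hasDerivAt_expNegInvGlue x)).congr_deriv ?_).deriv
  rcases eq_or_ne x 0 with rfl | hx
  · simp
  · field_simp
    ring

theorem expNegInvGlue_le_deriv_deriv (x : ℝ) :
    expNegInvGlue x ≤ deriv (deriv sqMulExpNegInvGlue) x := by
  rw [deriv_deriv_eq]
  exact le_mul_of_one_le_left (expNegInvGlue.nonneg x) (le_add_of_nonneg_left (sq_nonneg _))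

theorem deriv_nonneg (x : ℝ) : 0 ≤ deriv sqMulExpNegInvGlue x := by
  rw [deriv_eq]
  rcases le_total x 0 with hx | hx
  · simp only [expNegInvGlue.zero_of_nonpos hx, mul_zero, le_refl]
  · exact mul_nonneg (by positivity) (expNegInvGlue.nonneg x)

protected theorem monotone : Monotone sqMulExpNegInvGlue :=
  monotone_of_deriv_nonneg differentiable deriv_nonneg

theorem convexOn_univ : ConvexOn ℝ Set.univ sqMulExpNegInvGlue := by
  have hderiv : Differentiable ℝ (deriv sqMulExpNegInvGlue) :=
    (contDiff (n := 2)).differentiable_deriv_two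
  exact convexOn_univ_of_deriv2_nonneg differentiable hderiv fun x =>
    (expNegInvGlue.nonneg x).trans (expNegInvGlue_le_deriv_deriv x)

theorem lintegral_Ioi_sqrt_deriv_deriv_comp_sub_const_eq_top (a b : ℝ) :
    ∫⁻ t in Set.Ioi b,
      ENNReal.ofReal √(deriv (deriv fun t => sqMulExpNegInvGlue (t - a)) t) = ⊤ := by
  have hpos : 0 < √(expNegInvGlue 1) := Real.sqrt_pos.2 (expNegInvGlue.pos_of_pos one_pos)
  refine lintegral_Ioi_eq_top_of_eventually_le (ENNReal.ofReal_pos.2 hpos).ne' ?_ b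
  filter_upwards [Filter.eventually_ge_atTop (1 + a)] with t ht
  have hshift : deriv (deriv fun t => sqMulExpNegInvGlue (t - a)) t =
      deriv (deriv sqMulExpNegInvGlue) (t - a) := by
    simp only [funext fun s => deriv_comp_sub_const (f := sqMulExpNegInvGlue) (x := s) a,
      deriv_comp_sub_const]
  rw [hshift]
  gcongr
  exact (expNegInvGlue.monotone (le_sub_iff_add_le.2 ht)).trans
    (expNegInvGlue_le_deriv_deriv (t - a))

end sqMulExpNegInvGlue

theorem stmt_0_general (a : ℝ) :
    ∃ τ : ℝ → ℝ,
      ContDiff ℝ (⊤ : ℕ∞) τ ∧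
      Monotone τ ∧
      ConvexOn ℝ Set.univ τ ∧
      (∀ t : ℝ, t ≤ a → τ t = 0) ∧
      (∀ t : ℝ, a < t → 0 < τ t) ∧
      (∫⁻ t in Set.Ioi (0 : ℝ),
          ENNReal.ofReal (Real.sqrt (deriv (deriv τ) t)) = ⊤) := by
  refine ⟨fun t => sqMulExpNegInvGlue (t - a), ?smooth, ?monotone, ?convex, ?zero, ?pos, ?integral⟩
  case smooth => exact sqMulExpNegInvGlue.contDiff.comp (contDiff_id.sub contDiff_const)
  case monotone => exact fun s t hst => sqMulExpNegInvGlue.monotone (sub_le_sub_right hst a)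
  case convex =>
    simpa only [Set.preimage_univ, Function.comp_def, ← sub_eq_add_neg]
      using sqMulExpNegInvGlue.convexOn_univ.translate_left (-a)
  case zero => exact fun t ht => sqMulExpNegInvGlue.zero_of_nonpos (sub_nonpos.2 ht)
  case pos => exact fun t ht => sqMulExpNegInvGlue.pos_of_pos (sub_pos.2 ht)
  case integral => exact sqMulExpNegInvGlue.lintegral_Ioi_sqrt_deriv_deriv_comp_sub_const_eq_top a 0

/-- Construction 4.1 of the paper: for any reals `c₁ < c₂` there is a smooth,
monotone increasing, convex function `τ : ℝ → ℝ` vanishing exactly on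
`(-∞, 1/(c₂ - c₁)]`, positive to the right of that point, and such that
`∫₀^∞ √(τ''(t)) dt = +∞`. -/
theorem stmt_0 (c₁ c₂ : ℝ) (h : c₁ < c₂) :
    ∃ τ : ℝ → ℝ,
      ContDiff ℝ (⊤ : ℕ∞) τ ∧
      Monotone τ ∧
      ConvexOn ℝ Set.univ τ ∧
      (∀ t : ℝ, t ≤ 1 / (c₂ - c₁) → τ t = 0) ∧
      (∀ t : ℝ, 1 / (c₂ - c₁) < t → 0 < τ t) ∧
      (∫⁻ t in Set.Ioi (0 : ℝ),
          ENNReal.ofReal (Real.sqrt (deriv (deriv τ) t)) = ⊤) :=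
  stmt_0_general (1 / (c₂ - c₁))
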